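/- For the rack bialgebra C = k·1 ⊕ k·g with group-like g and g ◁ g = 1, the universal enveloping algebra U(C) is the bialgebra generated by one group-like element g subject to g² = g, and U(C) ≅ k ⊕ k as a k-algebra. -/

import Mathlib

open TensorProduct

set_option maxHeartbeats 1000000

/-- A rack bialgebra over a field `k`: a counital coaugmented coalgebra
`(C, Δ, ε, 1)` together with a coalgebra morphism `◁ : C ⊗ C → C`
(given here as a bilinear map `lhd`) which is self-distributive and satisfies
`x ◁ 1 = x`, `1 ◁ x = ε(x)·1` and `ε(x ◁ y) = ε(x)ε(y)`. -/
structure RackBialgebra (k C : Type) [Field k] [AddCommGroup C] [Module k C] where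
  comul : C →ₗ[k] C ⊗[k] C
  counit : C →ₗ[k] k
  one : C
  lhd : C →ₗ[k] C →ₗ[k] C
  coassoc : (TensorProduct.assoc k C C C).toLinearMap ∘ₗ
      TensorProduct.map comul LinearMap.id ∘ₗ comul =
    TensorProduct.map LinearMap.id comul ∘ₗ comul
  counit_comul : (TensorProduct.lid k C).toLinearMap ∘ₗ
      TensorProduct.map counit LinearMap.id ∘ₗ comul = LinearMap.id
  comul_counit : (TensorProduct.rid k C).toLinearMap ∘ₗ
      TensorProduct.map LinearMap.id counit ∘ₗ comul = LinearMap.id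
  comul_one : comul one = one ⊗ₜ[k] one
  counit_one : counit one = 1
  lhd_one : ∀ a, lhd a one = a
  one_lhd : ∀ a, lhd one a = counit a • one
  counit_lhd : ∀ a b, counit (lhd a b) = counit a * counit b
  lhd_coalgebra_morphism : comul ∘ₗ TensorProduct.lift lhd =
    TensorProduct.map (TensorProduct.lift lhd) (TensorProduct.lift lhd) ∘ₗ
      (TensorProduct.tensorTensorTensorComm k C C C C).toLinearMap ∘ₗ
      TensorProduct.map comul comul
  self_distrib : TensorProduct.lift lhd ∘ₗ
      TensorProduct.map (TensorProduct.lift lhd) LinearMap.id =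
    TensorProduct.lift lhd ∘ₗ
      TensorProduct.map (TensorProduct.lift lhd) (TensorProduct.lift lhd) ∘ₗ
      (TensorProduct.tensorTensorTensorComm k C C C C).toLinearMap ∘ₗ
      TensorProduct.map LinearMap.id comul

/-- Cocommutativity of the underlying coalgebra of a rack bialgebra. -/
def RackBialgebra.Cocommutative {k C : Type} [Field k] [AddCommGroup C]
    [Module k C] (R : RackBialgebra k C) : Prop :=
  (TensorProduct.comm k C C).toLinearMap ∘ₗ R.comul = R.comul

open TensorProduct

variable {k C : Type} [Field k] [AddCommGroup C] [Module k C]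

/-- `Č = ker ε`, the kernel of the counit of a rack bialgebra. -/
def Cbar (R : RackBialgebra k C) : Submodule k C := LinearMap.ker R.counit

/-- The canonical projection `C → Č`, `x ↦ x − ε(x)·1`. -/
def pbar (R : RackBialgebra k C) : C →ₗ[k] Cbar R :=
  LinearMap.codRestrict (Cbar R)
    (LinearMap.id - LinearMap.toSpanSingleton k C R.one ∘ₗ R.counit)
    (fun x => by
      simp [Cbar, LinearMap.mem_ker, LinearMap.toSpanSingleton_apply,
        R.counit_one])

/-- The tensor algebra `T = T(Č)` on `Č = ker ε`. -/
abbrev TT (R : RackBialgebra k C) : Type := TensorAlgebra k (Cbar R)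

/-- The canonical linear map `i : C → T(Č)`, the identity on `Č` and sending
the coaugmentation `1 ∈ C` to the scalar `1 ∈ T(Č)`. -/
noncomputable def iT (R : RackBialgebra k C) : C →ₗ[k] TT R :=
  TensorAlgebra.ι k ∘ₗ pbar R + Algebra.linearMap k (TT R) ∘ₗ R.counit

/-- The coproduct on `T = T(Č)`: the unique algebra map `T → T ⊗ T` with
`Δ_T(i(x)) = i(x₁) ⊗ i(x₂)`. -/
noncomputable def comulT (R : RackBialgebra k C) : TT R →ₐ[k] TT R ⊗[k] TT R :=
  TensorAlgebra.lift k
    (TensorProduct.map (iT R) (iT R) ∘ₗ R.comul ∘ₗ (Cbar R).subtype)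

/-- The counit on `T = T(Č)`: the unique algebra map `T → k` vanishing
on `Č`. -/
noncomputable def counitT (R : RackBialgebra k C) : TT R →ₐ[k] k :=
  TensorAlgebra.lift k (0 : Cbar R →ₗ[k] k)

/-- The element `i(y₁).i(x ◁ y₂)` of `T(Č)`, as a linear map in `x ⊗ y`. -/
noncomputable def gen1 (R : RackBialgebra k C) : C ⊗[k] C →ₗ[k] TT R :=
  LinearMap.mul' k (TT R) ∘ₗ
    TensorProduct.map (iT R) (iT R ∘ₗ TensorProduct.lift R.lhd) ∘ₗ
    (TensorProduct.leftComm k C C C).toLinearMap ∘ₗ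
    TensorProduct.map LinearMap.id R.comul

/-- The element `i(x).i(y)` of `T(Č)`, as a linear map in `x ⊗ y`. -/
noncomputable def gen2 (R : RackBialgebra k C) : C ⊗[k] C →ₗ[k] TT R :=
  LinearMap.mul' k (TT R) ∘ₗ TensorProduct.map (iT R) (iT R)

/-- The two-sided ideal `J` of `T(Č)` generated by the elements
`i(y₁).i(x ◁ y₂) − i(x).i(y)` for `x, y ∈ C`, as a `k`-submodule. -/
noncomputable def idealJ (R : RackBialgebra k C) : Submodule k (TT R) :=
  Submodule.span k
    {t | ∃ (a b : TT R) (c : C ⊗[k] C), t = a * (gen1 R c - gen2 R c) * b}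


/-- The relation on `T(Č)` identifying `i(y₁).i(x ◁ y₂)` with `i(x).i(y)`. -/
noncomputable def relU (R : RackBialgebra k C) : TT R → TT R → Prop :=
  fun s t => ∃ c : C ⊗[k] C, s = gen1 R c ∧ t = gen2 R c

/-- The universal enveloping algebra `U(C) = T(Č)/J`. -/
abbrev UC (R : RackBialgebra k C) : Type := RingQuot (relU R)

/-- The canonical map `q : C → U(C)`. -/
noncomputable def qU (R : RackBialgebra k C) : C →ₗ[k] UC R :=
  (RingQuot.mkAlgHom k (relU R)).toLinearMap ∘ₗ iT R


/-- The coproduct of the rack bialgebra `C = k·1 ⊕ k·g` in which both `1=(1,0)`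
and `g=(0,1)` are group-like. -/
noncomputable def comulGG : (k × k) →ₗ[k] (k × k) ⊗[k] (k × k) :=
  LinearMap.toSpanSingleton k ((k × k) ⊗[k] (k × k))
      (((1 : k), (0 : k)) ⊗ₜ[k] ((1 : k), (0 : k))) ∘ₗ LinearMap.fst k k k +
  LinearMap.toSpanSingleton k ((k × k) ⊗[k] (k × k))
      (((0 : k), (1 : k)) ⊗ₜ[k] ((0 : k), (1 : k))) ∘ₗ LinearMap.snd k k k

/-- The counit of the rack bialgebra `C = k·1 ⊕ k·g`. -/
def counitGG : (k × k) →ₗ[k] k := LinearMap.fst k k k + LinearMap.snd k k k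


/-- The rack product with `g ◁ g = 1`:
`(a·1 + x·g) ◁ (b·1 + y·g) = (ab + ay + xy)·1 + xb·g`. -/
def lhdGG1 : (k × k) →ₗ[k] (k × k) →ₗ[k] (k × k) :=
  LinearMap.mk₂ k (fun c d => (c.1 * d.1 + c.1 * d.2 + c.2 * d.2, c.2 * d.1))
    (fun m₁ m₂ n => by apply Prod.ext <;> simp <;> ring)
    (fun a m n => by
      apply Prod.ext <;> simp [Prod.smul_fst, Prod.smul_snd, smul_eq_mul] <;>
        ring)
    (fun m n₁ n₂ => by apply Prod.ext <;> simp <;> ring)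
    (fun a m n => by
      apply Prod.ext <;> simp [Prod.smul_fst, Prod.smul_snd, smul_eq_mul] <;>
        ring)

/-!
A linear map `φ : C → A` with `φ 1 = 1` and `φ(y₁) φ(x ◁ y₂) = φ(x) φ(y)` is the same thing as an
algebra map `U(C) → A`. On group-like elements the relation reads `φ(y) φ(x ◁ y) = φ(x) φ(y)`, and
for `C = k·1 ⊕ k·g` with `g ◁ g = 1` its only nontrivial instance, `x = y = g`, is
`φ(g) = φ(g)²`. Hence algebra maps `U(C) → A` are the idempotents of `A`, which is also the
universal property of `k × k` with its idempotent `(1, 0)`.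
-/

section Idempotent

variable {S A : Type*} [CommRing S] [Ring A] [Algebra S A]

/-- The algebra map `S × S → A`, `(a, b) ↦ a e + b (1 - e)`, classifying an idempotent `e` of `A`
as the image of `(1, 0)`. -/
def prodAlgHomOfIdempotent (e : A) (he : IsIdempotentElem e) : S × S →ₐ[S] A :=
  AlgHom.ofLinearMap
    ((LinearMap.toSpanSingleton S A e).coprod (LinearMap.toSpanSingleton S A (1 - e)))
    (by simp)
    (fun x y => by
      simp [add_mul, mul_add, he.eq, he.one_sub.eq, he.mul_one_sub_self, he.one_sub_mul_self,
        smul_smul, mul_comm])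

theorem prodAlgHomOfIdempotent_one_zero (e : A) (he : IsIdempotentElem e) :
    prodAlgHomOfIdempotent (S := S) e he (1, 0) = e := by
  simp [prodAlgHomOfIdempotent]

theorem prodAlgHom_ext {f f' : S × S →ₐ[S] A} (h : f (1, 0) = f' (1, 0)) : f = f' := by
  have map_zero_one (F : S × S →ₐ[S] A) : F (0, 1) = 1 - F (1, 0) := by
    rw [← map_one F, ← map_sub, Prod.one_eq_mk, Prod.mk_sub_mk, sub_self, sub_zero]
  have h' : f (0, 1) = f' (0, 1) := by rw [map_zero_one, map_zero_one, h]
  apply AlgHom.toLinearMap_injective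
  ext <;> simpa

end Idempotent

namespace RackBialgebra

variable {A : Type*} [Semiring A] [Algebra k A] (R : RackBialgebra k C)

theorem coe_pbar (x : C) : (pbar R x : C) = x - R.counit x • R.one := rfl

theorem iT_one : iT R R.one = 1 := by
  have pbar_one : pbar R R.one = 0 := Subtype.ext (by simp [coe_pbar, R.counit_one])
  simp [iT, pbar_one, R.counit_one]

theorem iT_coe (x : Cbar R) : iT R x = TensorAlgebra.ι k x := by
  have counit_coe : R.counit x = 0 := x.2
  have pbar_coe : pbar R x = x := Subtype.ext (by simp [coe_pbar, counit_coe])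
  simp [iT, pbar_coe, counit_coe]

/-- The algebra map `T(Č) → A` extending the restriction of `φ : C → A` to `Č`. -/
noncomputable def liftT (φ : C →ₗ[k] A) : TT R →ₐ[k] A :=
  TensorAlgebra.lift k (φ ∘ₗ (Cbar R).subtype)

variable {R}

theorem liftT_iT {φ : C →ₗ[k] A} (hφ : φ R.one = 1) (x : C) : liftT R φ (iT R x) = φ x := by
  calc liftT R φ (iT R x) = φ (pbar R x) + R.counit x • 1 := by
        simp [liftT, iT, Algebra.algebraMap_eq_smul_one]
    _ = φ (pbar R x + R.counit x • R.one) := by rw [map_add, map_smul, hφ]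
    _ = φ x := by rw [coe_pbar, sub_add_cancel]

theorem TT_hom_ext {f f' : TT R →ₐ[k] A} (h : ∀ x, f (iT R x) = f' (iT R x)) : f = f' := by
  ext x
  simpa [iT_coe] using h x

theorem comulT_iT (x : C) :
    comulT R (iT R x) = TensorProduct.map (iT R) (iT R) (R.comul x) :=
  liftT_iT (φ := TensorProduct.map (iT R) (iT R) ∘ₗ R.comul)
    (by simp [R.comul_one, iT_one, Algebra.TensorProduct.one_def]) x

theorem counitT_iT (x : C) : counitT R (iT R x) = R.counit x := by
  simp [counitT, iT]

theorem qU_one : qU R R.one = 1 := by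
  simp [qU, iT_one]

theorem adjoin_range_qU : Algebra.adjoin k (Set.range (qU R)) = ⊤ := by
  have ι_image_subset : RingQuot.mkAlgHom k (relU R) '' Set.range (TensorAlgebra.ι k) ⊆
      Set.range (qU R) := by
    rintro _ ⟨_, ⟨x, rfl⟩, rfl⟩
    exact ⟨x, by simp [qU, iT_coe]⟩
  rw [eq_top_iff, ← (AlgHom.range_eq_top _).2 (RingQuot.mkAlgHom_surjective k (relU R)),
    ← Algebra.map_top, ← TensorAlgebra.adjoin_range_ι, AlgHom.map_adjoin]
  exact Algebra.adjoin_mono ι_image_subset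

variable (R) in
/-- `φ : C → A` satisfies `φ 1 = 1` and `φ(y₁) φ(x ◁ y₂) = φ(x) φ(y)`. These are the maps
through which `U(C)` is universal. -/
structure IsEnvelopingMap (φ : C →ₗ[k] A) : Prop where
  map_one : φ R.one = 1
  map_rel : LinearMap.mul' k A ∘ₗ TensorProduct.map φ (φ ∘ₗ TensorProduct.lift R.lhd) ∘ₗ
      (TensorProduct.leftComm k C C C).toLinearMap ∘ₗ TensorProduct.map LinearMap.id R.comul =
    LinearMap.mul' k A ∘ₗ TensorProduct.map φ φ

theorem algHom_comp_gen1 {φ : C →ₗ[k] A} {f : TT R →ₐ[k] A} (hf : ∀ x, f (iT R x) = φ x) :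
    f.toLinearMap ∘ₗ gen1 R =
      LinearMap.mul' k A ∘ₗ TensorProduct.map φ (φ ∘ₗ TensorProduct.lift R.lhd) ∘ₗ
        (TensorProduct.leftComm k C C C).toLinearMap ∘ₗ
        TensorProduct.map LinearMap.id R.comul := by
  simp only [gen1, ← LinearMap.comp_assoc]
  congr 2
  ext
  simp [hf]

theorem algHom_comp_gen2 {φ : C →ₗ[k] A} {f : TT R →ₐ[k] A} (hf : ∀ x, f (iT R x) = φ x) :
    f.toLinearMap ∘ₗ gen2 R = LinearMap.mul' k A ∘ₗ TensorProduct.map φ φ := by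
  ext
  simp [gen2, hf]

theorem isEnvelopingMap_qU : IsEnvelopingMap R (qU R) where
  map_one := qU_one
  map_rel := by
    rw [← algHom_comp_gen1 (f := RingQuot.mkAlgHom k (relU R)) fun _ => rfl,
      ← algHom_comp_gen2 (f := RingQuot.mkAlgHom k (relU R)) fun _ => rfl]
    exact LinearMap.ext fun c => RingQuot.mkAlgHom_rel k ⟨c, rfl, rfl⟩

/-- The algebra map `U(C) → A` induced by an enveloping map `C → A`. -/
noncomputable def liftUC {φ : C →ₗ[k] A} (hφ : IsEnvelopingMap R φ) : UC R →ₐ[k] A :=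
  RingQuot.liftAlgHom k ⟨liftT R φ, by
    rintro _ _ ⟨c, rfl, rfl⟩
    have lift_iT := liftT_iT hφ.map_one
    exact LinearMap.congr_fun
      ((algHom_comp_gen1 lift_iT).trans (hφ.map_rel.trans (algHom_comp_gen2 lift_iT).symm)) c⟩

theorem liftUC_qU {φ : C →ₗ[k] A} (hφ : IsEnvelopingMap R φ) (x : C) :
    liftUC hφ (qU R x) = φ x := by
  simp [liftUC, qU, liftT_iT hφ.map_one]

theorem isEnvelopingMap_counit : IsEnvelopingMap R R.counit where
  map_one := R.counit_one
  map_rel := by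
    have counit_rel (x : C) (t : C ⊗[k] C) :
        LinearMap.mul' k k (TensorProduct.map R.counit (R.counit ∘ₗ TensorProduct.lift R.lhd)
          (TensorProduct.leftComm k C C C (x ⊗ₜ t))) =
        R.counit x * R.counit (TensorProduct.lid k C
          (TensorProduct.map R.counit LinearMap.id t)) := by
      induction t with
      | zero => simp
      | tmul y z => simp [R.counit_lhd, mul_left_comm]
      | add s t hs ht => simp only [TensorProduct.tmul_add, map_add, mul_add, hs, ht]
    ext x y
    have counit_comul_apply := LinearMap.congr_fun R.counit_comul y
    simp only [LinearMap.comp_apply, LinearEquiv.coe_coe, LinearMap.id_apply] at counit_comul_apply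
    simp [counit_rel, counit_comul_apply]

theorem liftUC_counit_comp_mkAlgHom :
    (liftUC (isEnvelopingMap_counit (R := R))).comp (RingQuot.mkAlgHom k (relU R)) =
      counitT R :=
  TT_hom_ext fun x => (liftUC_qU _ x).trans (counitT_iT x).symm

theorem liftUC_comul_comp_mkAlgHom
    (h : IsEnvelopingMap R (TensorProduct.map (qU R) (qU R) ∘ₗ R.comul)) :
    (liftUC h).comp (RingQuot.mkAlgHom k (relU R)) =
      (Algebra.TensorProduct.map (RingQuot.mkAlgHom k (relU R))
        (RingQuot.mkAlgHom k (relU R))).comp (comulT R) := by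
  refine TT_hom_ext fun x => (liftUC_qU h x).trans ?_
  rw [AlgHom.comp_apply, comulT_iT, LinearMap.comp_apply, qU, TensorProduct.map_comp]
  rfl

section GroupLike

variable {x y : C}

theorem counit_eq_one_of_comul_eq_tmul_self (hy : R.comul y = y ⊗ₜ y) (hy0 : y ≠ 0) :
    R.counit y = 1 := by
  have counit_smul : R.counit y • y = y := by
    simpa [hy] using LinearMap.congr_fun R.counit_comul y
  exact smul_left_injective k hy0 (by simpa using counit_smul)

theorem comul_lhd_of_comul_eq_tmul_self (hx : R.comul x = x ⊗ₜ x) (hy : R.comul y = y ⊗ₜ y) :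
    R.comul (R.lhd x y) = R.lhd x y ⊗ₜ R.lhd x y := by
  simpa [hx, hy] using LinearMap.congr_fun R.lhd_coalgebra_morphism (x ⊗ₜ y)

theorem IsEnvelopingMap.mul_map_lhd {φ : C →ₗ[k] A} (hφ : IsEnvelopingMap R φ) (x : C)
    (hy : R.comul y = y ⊗ₜ y) : φ y * φ (R.lhd x y) = φ x * φ y := by
  simpa [hy] using LinearMap.congr_fun hφ.map_rel (x ⊗ₜ y)

variable {ι : Type*} {v : ι → C}

theorem IsEnvelopingMap.of_span_eq_top (hspan : Submodule.span k (Set.range v) = ⊤)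
    (hv : ∀ i, R.comul (v i) = v i ⊗ₜ v i) {φ : C →ₗ[k] A} (map_one : φ R.one = 1)
    (map_rel : ∀ i j, φ (v j) * φ (R.lhd (v i) (v j)) = φ (v i) * φ (v j)) :
    IsEnvelopingMap R φ where
  map_one := map_one
  map_rel := TensorProduct.ext <| LinearMap.ext_on_range hspan fun i =>
    LinearMap.ext_on_range hspan fun j => by simpa [hv] using map_rel i j

theorem isEnvelopingMap_map_qU_comp_comul (hspan : Submodule.span k (Set.range v) = ⊤)
    (hv : ∀ i, R.comul (v i) = v i ⊗ₜ v i) :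
    IsEnvelopingMap R (TensorProduct.map (qU R) (qU R) ∘ₗ R.comul) := by
  refine .of_span_eq_top hspan hv ?_ fun i j => ?_
  · simp [R.comul_one, qU_one, Algebra.TensorProduct.one_def]
  · simp [hv, comul_lhd_of_comul_eq_tmul_self, isEnvelopingMap_qU.mul_map_lhd]

end GroupLike

theorem isIdempotentElem_qU {g : C} (hg : R.comul g = g ⊗ₜ g) (hgg : R.lhd g g = R.one) :
    IsIdempotentElem (qU R g) := by
  simpa [IsIdempotentElem, hgg, qU_one] using (isEnvelopingMap_qU.mul_map_lhd g hg).symm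

section TwoDimensional

variable {b : Module.Basis (Fin 2) k C}

theorem adjoin_qU_eq_top (hone : b 0 = R.one) : Algebra.adjoin k {qU R (b 1)} = ⊤ := by
  rw [eq_top_iff, ← adjoin_range_qU, Algebra.adjoin_le_iff]
  rintro _ ⟨x, rfl⟩
  rw [← b.sum_repr x, Fin.sum_univ_two, map_add, map_smul, map_smul, hone, qU_one]
  exact add_mem (Subalgebra.smul_mem _ (one_mem _) _)
    (Subalgebra.smul_mem _ (Algebra.self_mem_adjoin_singleton k _) _)

theorem UC_hom_ext (hone : b 0 = R.one) {f f' : UC R →ₐ[k] A}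
    (h : f (qU R (b 1)) = f' (qU R (b 1))) : f = f' :=
  AlgHom.ext_of_adjoin_eq_top (adjoin_qU_eq_top hone) (by simpa using h)

theorem comul_basis_eq_tmul_self (hone : b 0 = R.one) (hg : R.comul (b 1) = b 1 ⊗ₜ b 1)
    (i : Fin 2) : R.comul (b i) = b i ⊗ₜ b i := by
  fin_cases i
  · simpa [hone] using R.comul_one
  · exact hg

theorem isEnvelopingMap_constr_of_isIdempotentElem (hone : b 0 = R.one)
    (hg : R.comul (b 1) = b 1 ⊗ₜ b 1) (hgg : R.lhd (b 1) (b 1) = R.one) {e : A}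
    (he : IsIdempotentElem e) : IsEnvelopingMap R (b.constr k ![1, e]) := by
  have counit_g := counit_eq_one_of_comul_eq_tmul_self hg (b.ne_zero 1)
  have map_one : b.constr k ![1, e] R.one = 1 := by simp [← hone]
  refine .of_span_eq_top b.span_eq (comul_basis_eq_tmul_self hone hg) map_one fun i j => ?_
  fin_cases i <;> fin_cases j <;>
    simp [hone, map_one, R.lhd_one, R.one_lhd, counit_g, hgg, he.eq]

theorem nonempty_UC_algEquiv_prod (hone : b 0 = R.one)
    (hg : R.comul (b 1) = b 1 ⊗ₜ b 1) (hgg : R.lhd (b 1) (b 1) = R.one) :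
    Nonempty (UC R ≃ₐ[k] k × k) := by
  have idem : IsIdempotentElem ((1, 0) : k × k) := by simp [IsIdempotentElem]
  have idem_g := isIdempotentElem_qU hg hgg
  let toProd : UC R →ₐ[k] k × k :=
    liftUC (isEnvelopingMap_constr_of_isIdempotentElem hone hg hgg idem)
  let ofProd : k × k →ₐ[k] UC R := prodAlgHomOfIdempotent (qU R (b 1)) idem_g
  have toProd_g : toProd (qU R (b 1)) = (1, 0) := by simp [toProd, liftUC_qU]
  have ofProd_one_zero : ofProd (1, 0) = qU R (b 1) := prodAlgHomOfIdempotent_one_zero _ idem_g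
  exact ⟨AlgEquiv.ofAlgHom toProd ofProd
    (prodAlgHom_ext (by simp [ofProd_one_zero, toProd_g]))
    (UC_hom_ext hone (by simp [ofProd_one_zero, toProd_g]))⟩

end TwoDimensional

end RackBialgebra

open RackBialgebra in
theorem UC_involutory_rack_idempotent_general (R : RackBialgebra k C)
    (b : Module.Basis (Fin 2) k C) (hone : b 0 = R.one) (hg : R.comul (b 1) = b 1 ⊗ₜ b 1)
    (hgg : R.lhd (b 1) (b 1) = R.one) :
    ∃ (comulU : UC R →ₐ[k] UC R ⊗[k] UC R) (counitU : UC R →ₐ[k] k),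
      (comulU.toLinearMap ∘ₗ (RingQuot.mkAlgHom k (relU R)).toLinearMap =
        TensorProduct.map (RingQuot.mkAlgHom k (relU R)).toLinearMap
            (RingQuot.mkAlgHom k (relU R)).toLinearMap ∘ₗ
          (comulT R).toLinearMap) ∧
      (counitU.toLinearMap ∘ₗ (RingQuot.mkAlgHom k (relU R)).toLinearMap =
        (counitT R).toLinearMap) ∧
      (comulU (qU R (b 1)) = qU R (b 1) ⊗ₜ[k] qU R (b 1)) ∧
      (qU R (b 1) * qU R (b 1) = qU R (b 1)) ∧
      (Algebra.adjoin k {qU R (b 1)} = ⊤) ∧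
      Nonempty (UC R ≃ₐ[k] (k × k)) := by
  have hcomul := isEnvelopingMap_map_qU_comp_comul b.span_eq (comul_basis_eq_tmul_self hone hg)
  refine ⟨liftUC hcomul, liftUC isEnvelopingMap_counit,
    congrArg AlgHom.toLinearMap (liftUC_comul_comp_mkAlgHom hcomul),
    congrArg AlgHom.toLinearMap liftUC_counit_comp_mkAlgHom, ?_,
    isIdempotentElem_qU hg hgg, adjoin_qU_eq_top hone, nonempty_UC_algEquiv_prod hone hg hgg⟩
  simp [liftUC_qU, hg]

/-- for the rack bialgebra `C = k·1 ⊕ k·g` with `g` group-like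
and `g ◁ g = 1`, the universal enveloping algebra `U(C)` is the bialgebra
generated by one group-like element `q(g)` subject to `q(g)² = q(g)`, and
`U(C) ≅ k ⊕ k` as a `k`-algebra. -/
theorem UC_involutory_rack_idempotent
    (R : RackBialgebra k (k × k))
    (hc : R.comul = comulGG (k := k)) (he : R.counit = counitGG (k := k))
    (h1 : R.one = ((1 : k), (0 : k))) (hl : R.lhd = lhdGG1 (k := k)) :
    ∃ (comulU : UC R →ₐ[k] UC R ⊗[k] UC R) (counitU : UC R →ₐ[k] k),
      -- the induced bialgebra structure on `U(C)`
      (comulU.toLinearMap ∘ₗ (RingQuot.mkAlgHom k (relU R)).toLinearMap =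
        TensorProduct.map (RingQuot.mkAlgHom k (relU R)).toLinearMap
            (RingQuot.mkAlgHom k (relU R)).toLinearMap ∘ₗ
          (comulT R).toLinearMap) ∧
      (counitU.toLinearMap ∘ₗ (RingQuot.mkAlgHom k (relU R)).toLinearMap =
        (counitT R).toLinearMap) ∧
      -- the generator `q(g)` is group-like and idempotent, and generates
      (comulU (qU R ((0 : k), (1 : k))) =
        qU R ((0 : k), (1 : k)) ⊗ₜ[k] qU R ((0 : k), (1 : k))) ∧
      (qU R ((0 : k), (1 : k)) * qU R ((0 : k), (1 : k)) =
        qU R ((0 : k), (1 : k))) ∧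
      (Algebra.adjoin k {qU R ((0 : k), (1 : k))} = ⊤) ∧
      -- `U(C) ≅ k ⊕ k` as a `k`-algebra
      Nonempty (UC R ≃ₐ[k] (k × k)) := by
  simpa using UC_involutory_rack_idempotent_general R (Module.Basis.finTwoProd k)
    (by simp [h1]) (by simp [hc, comulGG]) (by simp [hl, lhdGG1, h1])
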